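/- arXiv:2502.03003 — 2 statements merged into one kernel-verified Lean document; each statement's English description precedes it below -/
import Mathlib

section
/- Let γ > 0, Δ > 0, and let B : {(r,t) : r > 0, t ∈ ℝ} → ℝ be continuously differentiable and satisfy the effective equation ∂_t B + ∂_r [ (r³/(2γ√Δ)) sin²(B/r²) ] = 0 at every point with r > 0. Then for every natural number n and every point with r > 0, r^{3n/2} sinⁿ(B/r²) · ∂_t B + (1/((n+2)γ√Δ)) · ∂_r [ r^{3(n+2)/2} sin^{n+2}(B/r²) ] = 0. -/
/-!
Put `w = r^{3/2} sin(B/r²)`. On `r > 0` the flux of the effective equation is `w²/(2γ√Δ)`, so the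
equation reads `∂_t B + w ∂_r w / (γ√Δ) = 0`. Multiplying by `wⁿ` and using
`w^{n+1} ∂_r w = ∂_r(w^{n+2})/(n+2)` gives the claim.
-/

open Real

/-- Powers of `w = r^{3/2} sin(B/r²)` in the form in which they occur in the conservation laws. -/
lemma rpow_mul_sin_pow (x s : ℝ) (hx : 0 < x) (m : ℕ) :
    x ^ ((3 * (m : ℝ)) / 2) * s ^ m = (x ^ ((3 : ℝ) / 2) * s) ^ m := by
  rw [mul_pow, ← Real.rpow_mul_natCast hx.le]
  congr 2
  ring

/-- Any smooth solution of the effective dust-collapse equation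
`∂_t B + ∂_r[(r³/(2γ√Δ)) sin²(B/r²)] = 0` also satisfies, for every `n`, the
multiplied form
`r^{3n/2} sinⁿ(B/r²) ∂_t B + (1/((n+2)γ√Δ)) ∂_r[r^{3(n+2)/2} sin^{n+2}(B/r²)] = 0`. -/
theorem multiplied_conservation_forms
    (γ Δ : ℝ) (hγ : 0 < γ) (hΔ : 0 < Δ)
    (B : ℝ → ℝ → ℝ)
    (hB : ContDiffOn ℝ 1 (fun p : ℝ × ℝ => B p.1 p.2) {p : ℝ × ℝ | 0 < p.1})
    (hPDE : ∀ r t : ℝ, 0 < r →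
      deriv (fun t' => B r t') t +
        deriv (fun r' => r' ^ 3 / (2 * γ * Real.sqrt Δ) *
          Real.sin (B r' t / r' ^ 2) ^ 2) r = 0) :
    ∀ n : ℕ, ∀ r t : ℝ, 0 < r →
      r ^ ((3 * (n : ℝ)) / 2) * Real.sin (B r t / r ^ 2) ^ n *
          deriv (fun t' => B r t') t +
        (1 / (((n : ℝ) + 2) * γ * Real.sqrt Δ)) *
          deriv (fun r' => r' ^ ((3 * ((n : ℝ) + 2)) / 2) *
            Real.sin (B r' t / r' ^ 2) ^ (n + 2)) r = 0 := by
  intro n r t hr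
  have hBr : DifferentiableAt ℝ (fun r' => B r' t) r := by
    have hopen : IsOpen {p : ℝ × ℝ | 0 < p.1} := isOpen_lt continuous_const continuous_fst
    have hd : DifferentiableAt ℝ (fun p : ℝ × ℝ => B p.1 p.2) (r, t) :=
      (hB.differentiableOn one_ne_zero).differentiableAt (hopen.mem_nhds hr)
    exact hd.comp (f := fun r' : ℝ => (r', t)) r (by fun_prop)
  have hw : DifferentiableAt ℝ
      (fun r' => r' ^ ((3 : ℝ) / 2) * Real.sin (B r' t / r' ^ 2)) r := by
    have h1 : DifferentiableAt ℝ (fun r' : ℝ => r' ^ ((3 : ℝ) / 2)) r :=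
      (Real.hasDerivAt_rpow_const (Or.inl hr.ne')).differentiableAt
    have h2 : DifferentiableAt ℝ (fun r' : ℝ => B r' t / r' ^ 2) r :=
      hBr.div (by fun_prop) (by positivity)
    exact h1.mul h2.sin
  obtain ⟨w, hwdef⟩ : ∃ w : ℝ → ℝ,
      w = fun r' => r' ^ ((3 : ℝ) / 2) * Real.sin (B r' t / r' ^ 2) := ⟨_, rfl⟩
  rw [← hwdef] at hw
  have hpos : ∀ᶠ x in nhds r, 0 < x := lt_mem_nhds hr
  have hD1 : deriv (fun r' => r' ^ 3 / (2 * γ * Real.sqrt Δ) *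
      Real.sin (B r' t / r' ^ 2) ^ 2) r =
      (2 * γ * Real.sqrt Δ)⁻¹ * (2 * w r * deriv w r) := by
    have he : (fun r' => r' ^ 3 / (2 * γ * Real.sqrt Δ) * Real.sin (B r' t / r' ^ 2) ^ 2)
        =ᶠ[nhds r] fun r' => (2 * γ * Real.sqrt Δ)⁻¹ * w r' ^ 2 := by
      filter_upwards [hpos] with x hx
      have h3 : x ^ ((3 * ((2 : ℕ) : ℝ)) / 2) = x ^ 3 := by
        rw [← Real.rpow_natCast x 3]
        norm_num
      simp only [hwdef]
      rw [← rpow_mul_sin_pow x _ hx 2, h3]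
      ring
    rw [he.deriv_eq]
    have h := (hw.hasDerivAt.fun_pow 2).const_mul (2 * γ * Real.sqrt Δ)⁻¹
    simpa using h.deriv
  have hD2 : deriv (fun r' => r' ^ ((3 * ((n : ℝ) + 2)) / 2) *
      Real.sin (B r' t / r' ^ 2) ^ (n + 2)) r =
      ((n : ℝ) + 2) * w r ^ (n + 1) * deriv w r := by
    have he : (fun r' => r' ^ ((3 * ((n : ℝ) + 2)) / 2) * Real.sin (B r' t / r' ^ 2) ^ (n + 2))
        =ᶠ[nhds r] fun r' => w r' ^ (n + 2) := by
      filter_upwards [hpos] with x hx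
      have h := rpow_mul_sin_pow x (Real.sin (B x t / x ^ 2)) hx (n + 2)
      push_cast at h
      simpa only [hwdef] using h
    rw [he.deriv_eq]
    have h := hw.hasDerivAt.fun_pow (n + 2)
    simpa using h.deriv
  have hP := hPDE r t hr
  rw [hD1] at hP
  have hwr : r ^ ((3 * (n : ℝ)) / 2) * Real.sin (B r t / r ^ 2) ^ n = w r ^ n := by
    rw [rpow_mul_sin_pow r _ hr n, hwdef]
  rw [hwr, hD2, eq_neg_of_add_eq_zero_left hP]
  have hs : Real.sqrt Δ ≠ 0 := (Real.sqrt_pos.2 hΔ).ne'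
  have hn : (n : ℝ) + 2 ≠ 0 := by positivity
  field_simp
  ring
end

section
/- Let n ∈ ℕ, γ > 0, Δ > 0, R_S > 0 and L > 0 with L³ > γ²Δ R_S. Define the flux f_n(x, r) = r^{3(n+2)/2} sin^{n+2}(x) / ((n+2)γ√Δ). Then with x₊ = −arcsin(√(γ²Δ R_S / L³)) (the exterior value of B/r² at the shock) and x₋ = −π (the interior value), the flux jump across the shock is f_n(x₊, L) − f_n(x₋, L) = (−1)ⁿ γ^{n+1} Δ^{(n+1)/2} R_S^{(n+2)/2} / (n+2); in particular it is independent of the shock location L. -/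
/-!
Writing `s = √Δ`, `q = √RS` and `ℓ = √(L³)`, the half-integer powers become integer powers of
`s`, `q`, `ℓ`. The interior flux vanishes because `sin (-π) = 0`, and the bound on `L` puts the
square root in the domain where `sin (arcsin x) = x`, so the exterior flux is
`ℓ ^ (n + 2) * (-(γ * s * q / ℓ)) ^ (n + 2) / ((n + 2) * γ * s)`, in which `ℓ` cancels.
-/

open Real

/-- Half-integer real powers as natural powers of the square root. -/
lemma rpow_half_eq_sqrt_pow {x : ℝ} (hx : 0 ≤ x) (m : ℕ) :
    x ^ ((m : ℝ) / 2) = √x ^ m := by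
  rw [Real.sqrt_eq_rpow, ← Real.rpow_mul_natCast hx]
  congr 1
  ring

/-- The Rankine–Hugoniot flux jump across the shock for the `n`-th
conservation-law form: with interior value `B/r² = −π` and exterior value
`B/r² = −arcsin √(γ²Δ R_S/L³)`, the jump equals
`(−1)ⁿ γ^{n+1} Δ^{(n+1)/2} R_S^{(n+2)/2}/(n+2)`, independently of `L`. -/
theorem flux_jump_across_shock
    (n : ℕ) (γ Δ RS L : ℝ) (hγ : 0 < γ) (hΔ : 0 < Δ) (hRS : 0 < RS)
    (hL : 0 < L) (hhor : γ ^ 2 * Δ * RS < L ^ 3) :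
    (L ^ ((3 * ((n : ℝ) + 2)) / 2) *
        Real.sin (-Real.arcsin (Real.sqrt (γ ^ 2 * Δ * RS / L ^ 3))) ^ (n + 2) /
          (((n : ℝ) + 2) * γ * Real.sqrt Δ)) -
      (L ^ ((3 * ((n : ℝ) + 2)) / 2) * Real.sin (-π) ^ (n + 2) /
          (((n : ℝ) + 2) * γ * Real.sqrt Δ)) =
    (-1 : ℝ) ^ n * γ ^ (n + 1) * Δ ^ (((n : ℝ) + 1) / 2) *
      RS ^ (((n : ℝ) + 2) / 2) / ((n : ℝ) + 2) := by
  have hL3 : 0 < L ^ 3 := by positivity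
  have hsin : Real.sin (-Real.arcsin (√(γ ^ 2 * Δ * RS / L ^ 3))) =
      -(γ * √Δ * √RS / √(L ^ 3)) := by
    have hle : √(γ ^ 2 * Δ * RS / L ^ 3) ≤ 1 :=
      Real.sqrt_le_one.mpr ((div_le_one hL3).mpr hhor.le)
    rw [Real.sin_neg, Real.sin_arcsin (by linarith [Real.sqrt_nonneg (γ ^ 2 * Δ * RS / L ^ 3)]) hle,
      Real.sqrt_div (by positivity), Real.sqrt_mul (by positivity),
      Real.sqrt_mul (by positivity), Real.sqrt_sq hγ.le]
  have hLpow : L ^ ((3 * ((n : ℝ) + 2)) / 2) = √(L ^ 3) ^ (n + 2) := by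
    rw [← rpow_half_eq_sqrt_pow hL3.le, ← Real.rpow_natCast_mul hL.le]
    congr 1
    push_cast
    ring
  have hΔpow : Δ ^ (((n : ℝ) + 1) / 2) = √Δ ^ (n + 1) := by
    rw [← rpow_half_eq_sqrt_pow hΔ.le]
    push_cast
    rfl
  have hRSpow : RS ^ (((n : ℝ) + 2) / 2) = √RS ^ (n + 2) := by
    rw [← rpow_half_eq_sqrt_pow hRS.le]
    push_cast
    rfl
  have hs : 0 < √Δ := Real.sqrt_pos.mpr hΔ
  have hl : 0 < √(L ^ 3) := Real.sqrt_pos.mpr hL3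
  have hn : (n : ℝ) + 2 ≠ 0 := by positivity
  have hcancel : √(L ^ 3) ^ (n + 2) * (-(γ * √Δ * √RS / √(L ^ 3))) ^ (n + 2) =
      (-1) ^ n * (γ * √Δ * √RS) ^ (n + 2) := by
    rw [← mul_pow, show √(L ^ 3) * -(γ * √Δ * √RS / √(L ^ 3)) = -1 * (γ * √Δ * √RS) by
      field_simp, mul_pow, pow_add (-1 : ℝ) n 2]
    norm_num
  rw [hsin, hLpow, hΔpow, hRSpow, hcancel, Real.sin_neg, Real.sin_pi, neg_zero,
    zero_pow (by simp), mul_zero, zero_div, sub_zero]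
  field_simp
  ring
end
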